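/- arXiv:2402.04550 — 3 statements merged into one kernel-verified Lean document; each statement's English description precedes it below -/
import Mathlib

section
/- Let (Ω,P) be a probability space, Y : Ω → ℝ an integrable random variable, B a measurable event, and a ∈ ℝ such that P(B) = P(Y > a). Then E[Y·1_B] ≤ E[Y·1_{Y>a}]; that is, among all events of the same probability, the upper level set of Y maximizes the truncated expectation. -/
open MeasureTheory

/-- Among all events of a fixed probability, the upper level set of `Y`
maximizes the truncated expectation: if `P(B) = P(Y > a)` then
`E[Y·1_B] ≤ E[Y·1_{Y > a}]`. -/
theorem setIntegral_le_setIntegral_upperLevelSet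
    {Ω : Type*} [MeasurableSpace Ω] (P : Measure Ω) [IsProbabilityMeasure P]
    (Y : Ω → ℝ) (hYint : Integrable Y P) (hYm : Measurable Y)
    (B : Set Ω) (hB : MeasurableSet B) (a : ℝ)
    (hPB : P B = P {ω | a < Y ω}) :
    ∫ ω in B, Y ω ∂P ≤ ∫ ω in {ω | a < Y ω}, Y ω ∂P := by
  have hA : MeasurableSet {ω | a < Y ω} := measurableSet_lt measurable_const hYm
  have hint : Integrable (fun ω => Y ω - a) P := hYint.sub (integrable_const a)
  have key : ∫ ω in B, (Y ω - a) ∂P ≤ ∫ ω in {ω | a < Y ω}, (Y ω - a) ∂P := by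
    rw [← integral_indicator hB, ← integral_indicator hA]
    refine integral_mono (hint.indicator hB) (hint.indicator hA) ?_
    intro ω
    by_cases h1 : ω ∈ B <;> by_cases h2 : a < Y ω <;>
      simp [Set.indicator, h1, h2] <;> linarith
  have hr : P.real B = P.real {ω | a < Y ω} := by
    simp only [Measure.real, hPB]
  rw [integral_sub hYint.integrableOn (integrable_const a),
    integral_sub hYint.integrableOn (integrable_const a),
    setIntegral_const, setIntegral_const, hr] at key
  linarith
end

section
/- Let n ≥ 1, y : Fin n → ℝ, and let S, T ⊆ Fin n with |S| = |T| = m and 0 < m < n. If |Σ_{i∈S}(y_i − ȳ)| ≤ |Σ_{i∈T}(y_i − ȳ)|, where ȳ is the overall mean, then the empirical variance reductions satisfy Δ(S) ≤ Δ(T). -/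
/-- Arithmetic mean of `y` over the index set `S` (equal to `0` when `S = ∅`). -/
noncomputable def finsetMean {n : ℕ} (y : Fin n → ℝ) (S : Finset (Fin n)) : ℝ :=
  (∑ i ∈ S, y i) / S.card

/-- Empirical variance reduction of the split `(S, Sᶜ)`. -/
noncomputable def empVarReduction {n : ℕ} (y : Fin n → ℝ) (S : Finset (Fin n)) : ℝ :=
  ∑ i, (y i - finsetMean y Finset.univ) ^ 2
    - ∑ i ∈ S, (y i - finsetMean y S) ^ 2
    - ∑ i ∈ Sᶜ, (y i - finsetMean y Sᶜ) ^ 2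

/-- Sum of squares about the mean, expressed through sums centred at `c`. -/
theorem sum_sq_sub_finsetMean {n : ℕ} (y : Fin n → ℝ) (A : Finset (Fin n)) (c : ℝ)
    (hA : 0 < A.card) :
    ∑ i ∈ A, (y i - finsetMean y A) ^ 2
      = ∑ i ∈ A, (y i - c) ^ 2 - (∑ i ∈ A, (y i - c)) ^ 2 / A.card := by
  have hA' : (A.card : ℝ) ≠ 0 := by positivity
  have e : ∀ d : ℝ, ∑ i ∈ A, (y i - d) ^ 2
      = ∑ i ∈ A, y i ^ 2 - 2 * d * ∑ i ∈ A, y i + A.card * d ^ 2 := by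
    intro d
    simp only [sub_sq, Finset.sum_add_distrib, Finset.sum_sub_distrib, Finset.mul_sum,
      Finset.sum_const, nsmul_eq_mul]
    congr 2
    exact Finset.sum_congr rfl fun i _ => by ring
  rw [e, e, Finset.sum_sub_distrib, Finset.sum_const, nsmul_eq_mul]
  unfold finsetMean
  field_simp
  ring

/-- Closed form of the variance reduction. -/
theorem empVarReduction_eq {n : ℕ} (y : Fin n → ℝ) (S : Finset (Fin n))
    (h0 : 0 < S.card) (h1 : S.card < n) :
    empVarReduction y S = (∑ i ∈ S, (y i - finsetMean y Finset.univ)) ^ 2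
      * (1 / (S.card : ℝ) + 1 / ((n - S.card : ℕ) : ℝ)) := by
  have hc : (Sᶜ).card = n - S.card := by simp [Finset.card_compl]
  have hn : (n : ℝ) ≠ 0 := by
    have : n ≠ 0 := by omega
    exact_mod_cast this
  have hz : ∑ i, (y i - finsetMean y Finset.univ) = 0 := by
    simp [finsetMean, Finset.sum_sub_distrib]
    field_simp
    ring
  unfold empVarReduction
  rw [sum_sq_sub_finsetMean y S (finsetMean y Finset.univ) h0,
    sum_sq_sub_finsetMean y Sᶜ (finsetMean y Finset.univ) (by omega), hc]
  have a := Finset.sum_add_sum_compl S fun i => (y i - finsetMean y Finset.univ)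
  have b := Finset.sum_add_sum_compl S fun i => (y i - finsetMean y Finset.univ) ^ 2
  rw [hz] at a
  rw [← b, eq_neg_of_add_eq_zero_right a]
  ring

/-- Among splits of a fixed size `m`, the empirical variance reduction is a
monotone function of `|Σ_{i∈S}(y_i − ȳ)|`. -/
theorem empVarReduction_mono {n : ℕ} (hn : 1 ≤ n) (y : Fin n → ℝ)
    (S T : Finset (Fin n)) (m : ℕ)
    (hSm : S.card = m) (hTm : T.card = m) (hm0 : 0 < m) (hmn : m < n)
    (hle : |∑ i ∈ S, (y i - finsetMean y Finset.univ)|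
        ≤ |∑ i ∈ T, (y i - finsetMean y Finset.univ)|) :
    empVarReduction y S ≤ empVarReduction y T := by
  rw [empVarReduction_eq y S (by omega) (by omega), empVarReduction_eq y T (by omega) (by omega),
    hSm, hTm]
  exact mul_le_mul_of_nonneg_right (sq_le_sq.mpr hle) (by positivity)
end

section
/- Let n ≥ 1 and y : Fin n → ℝ. For every subset S ⊆ Fin n there exists a threshold a ∈ ℝ such that the split of indices by the response threshold, T_a = {i : y_i > a}, satisfies Δ(T_a) ≥ Δ(S). Consequently, for data points (x_i, y_i) the optimal CART impurity decrease over response-threshold (Lebesgue) splits is at least the optimal impurity decrease over covariate-threshold (Riemann) splits, since every covariate split induces some subset S of indices. -/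
theorem sum_sq_mean_le {n : ℕ} (y : Fin n → ℝ) (S : Finset (Fin n)) (c : ℝ) :
    ∑ i ∈ S, (y i - finsetMean y S) ^ 2 ≤ ∑ i ∈ S, (y i - c) ^ 2 := by
  rcases S.eq_empty_or_nonempty with rfl | hS
  · simp
  have hc : (S.card : ℝ) ≠ 0 := by exact_mod_cast hS.card_pos.ne'
  have hm : ∑ i ∈ S, y i = S.card * finsetMean y S := by
    unfold finsetMean; field_simp
  have key : ∑ i ∈ S, (y i - c) ^ 2 - ∑ i ∈ S, (y i - finsetMean y S) ^ 2
      = S.card * (finsetMean y S - c) ^ 2 := by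
    rw [← Finset.sum_sub_distrib]
    have : ∀ i ∈ S, (y i - c) ^ 2 - (y i - finsetMean y S) ^ 2
        = y i * (2 * (finsetMean y S - c)) + (c ^ 2 - finsetMean y S ^ 2) := by
      intro i _; ring
    rw [Finset.sum_congr rfl this, Finset.sum_add_distrib, ← Finset.sum_mul, hm,
      Finset.sum_const, nsmul_eq_mul]
    ring
  have : 0 ≤ (S.card : ℝ) * (finsetMean y S - c) ^ 2 := by positivity
  linarith

theorem threshold_aux {n : ℕ} (y : Fin n → ℝ) (S : Finset (Fin n))
    (h : finsetMean y Sᶜ ≤ finsetMean y S) :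
    ∃ a : ℝ,
      empVarReduction y S ≤
        empVarReduction y (Finset.univ.filter (fun i => a < y i)) := by
  refine ⟨(finsetMean y S + finsetMean y Sᶜ) / 2, ?_⟩
  unfold empVarReduction
  set p := finsetMean y S
  set q := finsetMean y Sᶜ
  set T := Finset.univ.filter (fun i => (p + q) / 2 < y i) with hT
  have h1 := sum_sq_mean_le y T p
  have h2 := sum_sq_mean_le y Tᶜ q
  have e : ∀ U : Finset (Fin n), ∑ i ∈ U, (y i - p) ^ 2 + ∑ i ∈ Uᶜ, (y i - q) ^ 2
      = ∑ i, if i ∈ U then (y i - p) ^ 2 else (y i - q) ^ 2 := by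
    intro U
    rw [← Finset.sum_add_sum_compl U]
    congr 1
    · exact Finset.sum_congr rfl fun i hi => by simp [hi]
    · exact Finset.sum_congr rfl fun i hi => by simp [Finset.mem_compl.mp hi]
  have h3 : ∑ i ∈ T, (y i - p) ^ 2 + ∑ i ∈ Tᶜ, (y i - q) ^ 2
      ≤ ∑ i ∈ S, (y i - p) ^ 2 + ∑ i ∈ Sᶜ, (y i - q) ^ 2 := by
    rw [e T, e S]
    refine Finset.sum_le_sum fun i _ => ?_
    have hi : i ∈ T ↔ (p + q) / 2 < y i := by simp [hT]
    by_cases hiT : i ∈ T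
    · have := hi.mp hiT
      by_cases hS : i ∈ S
      · simp [hiT, hS]
      · simp only [hiT, hS, if_true, if_false]; nlinarith
    · have := not_lt.mp (fun k => hiT (hi.mpr k))
      by_cases hS : i ∈ S
      · simp only [hiT, hS, if_true, if_false]; nlinarith
      · simp [hiT, hS]
  linarith

/-- For every subset `S` of indices there is a response threshold `a` such that
the Lebesgue split `{i : y i > a}` achieves at least as large an empirical
variance reduction as the split `(S, Sᶜ)`. -/
theorem exists_response_threshold_split {n : ℕ} (hn : 1 ≤ n) (y : Fin n → ℝ)
    (S : Finset (Fin n)) :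
    ∃ a : ℝ,
      empVarReduction y S ≤
        empVarReduction y (Finset.univ.filter (fun i => a < y i)) := by
  rcases le_total (finsetMean y Sᶜ) (finsetMean y S) with h | h
  · exact threshold_aux y S h
  · obtain ⟨a, ha⟩ := threshold_aux y Sᶜ (by rwa [compl_compl])
    refine ⟨a, le_trans (le_of_eq ?_) ha⟩
    unfold empVarReduction
    rw [compl_compl]
    ring
end
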